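/- For every integer k ≥ 0, the dimension of the space Ĥₖ of homogeneous degree-k polynomial solutions of the Navier equations equals n times the dimension of the space Hₖ of harmonic homogeneous polynomials of degree k: dim Ĥₖ = n · dim Hₖ. -/

import Mathlib

open MvPolynomial

/-- The Laplacian `Δ = ∑ᵣ ∂²_{xᵣ}` as an ℝ-linear map on `ℝ[x₁,…,xₙ]`. -/
noncomputable def lapL (n : ℕ) : MvPolynomial (Fin n) ℝ →ₗ[ℝ] MvPolynomial (Fin n) ℝ :=
  ∑ r : Fin n, ((pderiv r).toLinearMap.comp (pderiv r).toLinearMap)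

/-- The Navier operator `N(u)ⱼ = Δuⱼ + b·∂_{xⱼ}(∑ᵣ ∂_{xᵣ} uᵣ)` as an ℝ-linear map on
`n`-tuples of polynomials. -/
noncomputable def navierL (n : ℕ) (b : ℝ) :
    (Fin n → MvPolynomial (Fin n) ℝ) →ₗ[ℝ] (Fin n → MvPolynomial (Fin n) ℝ) :=
  LinearMap.pi fun j =>
    (lapL n).comp (LinearMap.proj j) +
      b • ((pderiv j).toLinearMap.comp
        (∑ r : Fin n, ((pderiv r).toLinearMap.comp
          (LinearMap.proj (R := ℝ) (φ := fun _ : Fin n => MvPolynomial (Fin n) ℝ) r))))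

/-- `Ĥₖ` : the subspace of `n`-tuples of homogeneous degree-`k` polynomials solving the
Navier equations. -/
noncomputable def HhatSub (n : ℕ) (b : ℝ) (k : ℕ) :
    Submodule ℝ (Fin n → MvPolynomial (Fin n) ℝ) :=
  (Submodule.pi Set.univ fun _ : Fin n => homogeneousSubmodule (Fin n) ℝ k) ⊓
    LinearMap.ker (navierL n b)

/-- `Hₖ` : harmonic homogeneous polynomials of degree `k`. -/
noncomputable def harmSub (n : ℕ) (k : ℕ) : Submodule ℝ (MvPolynomial (Fin n) ℝ) :=
  homogeneousSubmodule (Fin n) ℝ k ⊓ LinearMap.ker (lapL n)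

theorem lapL_apply (n : ℕ) (p : MvPolynomial (Fin n) ℝ) :
    lapL n p = ∑ r, pderiv r (pderiv r p) := by
  simp [lapL]

/-- Partial derivatives commute. -/
theorem pderiv_pderiv_comm {σ R : Type*} [CommRing R] (i j : σ) (p : MvPolynomial σ R) :
    pderiv i (pderiv j p) = pderiv j (pderiv i p) := by
  have h : ⁅pderiv (R := R) i, pderiv (R := R) j⁆ = 0 := by
    classical
    refine derivation_ext fun k => ?_
    rw [Derivation.commutator_apply]
    simp only [pderiv_X, Pi.single_apply]
    split_ifs <;> simp
  have h' := congrArg (fun D => D p) h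
  rw [Derivation.commutator_apply] at h'
  exact sub_eq_zero.mp h'

/-- The gradient as a linear map. -/
noncomputable def gradL (n : ℕ) :
    MvPolynomial (Fin n) ℝ →ₗ[ℝ] (Fin n → MvPolynomial (Fin n) ℝ) :=
  LinearMap.pi fun j => (pderiv j).toLinearMap

/-- The divergence as a linear map. -/
noncomputable def divL (n : ℕ) :
    (Fin n → MvPolynomial (Fin n) ℝ) →ₗ[ℝ] MvPolynomial (Fin n) ℝ :=
  ∑ r : Fin n, (pderiv r).toLinearMap.comp (LinearMap.proj r)

theorem gradL_apply (n : ℕ) (p : MvPolynomial (Fin n) ℝ) (j : Fin n) :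
    gradL n p j = pderiv j p := rfl

theorem divL_apply (n : ℕ) (u : Fin n → MvPolynomial (Fin n) ℝ) :
    divL n u = ∑ r, pderiv r (u r) := by
  simp [divL]

theorem divL_gradL (n : ℕ) (p : MvPolynomial (Fin n) ℝ) :
    divL n (gradL n p) = lapL n p := by
  simp [divL_apply, gradL_apply, lapL_apply]

theorem lapL_pderiv (n : ℕ) (j : Fin n) (p : MvPolynomial (Fin n) ℝ) :
    lapL n (pderiv j p) = pderiv j (lapL n p) := by
  simp only [lapL_apply, map_sum]
  refine Finset.sum_congr rfl fun r _ => ?_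
  rw [pderiv_pderiv_comm r j p, pderiv_pderiv_comm r j]

theorem navierL_apply (n : ℕ) (b : ℝ) (u : Fin n → MvPolynomial (Fin n) ℝ) (j : Fin n) :
    navierL n b u j = lapL n (u j) + b • pderiv j (divL n u) := by
  simp [navierL, divL]

theorem mem_harmSub {n k : ℕ} {p : MvPolynomial (Fin n) ℝ} :
    p ∈ harmSub n k ↔ p.IsHomogeneous k ∧ lapL n p = 0 := by
  simp [harmSub]

theorem mem_HhatSub {n k : ℕ} {b : ℝ} {u : Fin n → MvPolynomial (Fin n) ℝ} :
    u ∈ HhatSub n b k ↔ (∀ j, (u j).IsHomogeneous k) ∧ navierL n b u = 0 := by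
  simp [HhatSub, Submodule.mem_pi]

/-- Every monomial is the Laplacian of a homogeneous polynomial of degree two more. -/
theorem exists_lapL_eq_monomial {n : ℕ} (i : Fin n) (s : Fin n →₀ ℕ) :
    ∃ q : MvPolynomial (Fin n) ℝ,
      q.IsHomogeneous (s.degree + 2) ∧ lapL n q = monomial s 1 := by
  induction hd : s.degree - s i using Nat.strong_induction_on generalizing s with
  | _ d ih =>
    set t := s + Finsupp.single i 2 with ht
    have htd : t.degree = s.degree + 2 := by simp [ht]
    have key : ∀ r, r ≠ i → ∃ q : MvPolynomial (Fin n) ℝ, q.IsHomogeneous (s.degree + 2) ∧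
        lapL n q = pderiv r (pderiv r (monomial t 1)) := by
      intro r hr
      have htr : t r = s r := by simp [ht, hr.symm]
      by_cases h2 : 2 ≤ s r
      · set v := t - Finsupp.single r 1 - Finsupp.single r 1 with hv
        have htv : t = v + Finsupp.single r 2 := by
          ext a
          by_cases har : a = r
          · subst har
            simp [hv, htr]
            omega
          · simp [hv, Ne.symm har]
        have hvd : v.degree = s.degree := by
          have := congrArg Finsupp.degree htv
          simp only [htd, map_add, Finsupp.degree_single] at this
          omega
        have hvi : v i = s i + 2 := by simp [hv, ht, hr]
        have hsi : s i + s r ≤ s.degree := by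
          rw [Finsupp.degree_eq_sum, ← Finset.sum_pair hr.symm]
          exact Finset.sum_le_sum_of_subset (Finset.subset_univ _)
        obtain ⟨q, hq, hql⟩ := ih (v.degree - v i) (by omega) v rfl
        refine ⟨C ((t r : ℝ) * (t r - 1 : ℕ)) * q, ?_, ?_⟩
        · have := (isHomogeneous_C (Fin n) ((t r : ℝ) * (t r - 1 : ℕ))).mul hq
          rwa [zero_add, hvd] at this
        · rw [← smul_eq_C_mul, map_smul, hql, pderiv_monomial, pderiv_monomial]
          simp [smul_monomial, hv]
      · refine ⟨0, isHomogeneous_zero _ _ _, ?_⟩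
        rw [map_zero, pderiv_monomial, pderiv_monomial]
        have : t r = 0 ∨ t r - 1 = 0 := by omega
        rcases this with h | h <;> simp [h]
    choose! f hf hfl using key
    have hii : pderiv i (pderiv i (monomial t (1 : ℝ))) =
        ((s i + 2 : ℝ) * (s i + 1)) • monomial s 1 := by
      rw [pderiv_monomial, pderiv_monomial, smul_monomial]
      have : t - Finsupp.single i 1 - Finsupp.single i 1 = s := by
        ext a
        by_cases hai : a = i
        · subst hai
          simp [ht]
        · simp [ht, Ne.symm hai]
      rw [this]
      congr 1
      simp [ht]
    have hc : (s i + 2 : ℝ) * (s i + 1) ≠ 0 := by positivity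
    refine ⟨((s i + 2 : ℝ) * (s i + 1))⁻¹ •
      (monomial t 1 - ∑ r ∈ Finset.univ.erase i, f r), ?_, ?_⟩
    · refine (homogeneousSubmodule (Fin n) ℝ (s.degree + 2)).smul_mem _
        (Submodule.sub_mem _ (isHomogeneous_monomial _ htd) (Submodule.sum_mem _ fun r hr => ?_))
      exact hf r (Finset.ne_of_mem_erase hr)
    · rw [map_smul, map_sub, map_sum, lapL_apply,
        ← Finset.add_sum_erase _ _ (Finset.mem_univ i), hii,
        Finset.sum_congr rfl fun r hr => hfl r (Finset.ne_of_mem_erase hr),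
        add_sub_cancel_right, smul_smul, inv_mul_cancel₀ hc, one_smul]

/-- The Laplacian has a linear right inverse raising degrees by two. -/
theorem exists_lapL_rightInverse {n : ℕ} (hn : 0 < n) :
    ∃ G : MvPolynomial (Fin n) ℝ →ₗ[ℝ] MvPolynomial (Fin n) ℝ,
      (∀ p, lapL n (G p) = p) ∧ ∀ m p, p.IsHomogeneous m → (G p).IsHomogeneous (m + 2) := by
  choose g hg hgl using exists_lapL_eq_monomial (⟨0, hn⟩ : Fin n)
  have hG : ∀ s, (basisMonomials (Fin n) ℝ).constr ℝ g (monomial s 1) = g s := fun s => by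
    simpa using (basisMonomials (Fin n) ℝ).constr_basis ℝ g s
  refine ⟨(basisMonomials (Fin n) ℝ).constr ℝ g, fun p => ?_, fun m p hp => ?_⟩
  · have : lapL n ∘ₗ (basisMonomials (Fin n) ℝ).constr ℝ g = LinearMap.id :=
      (basisMonomials (Fin n) ℝ).ext fun s => by
        rw [LinearMap.comp_apply, Module.Basis.constr_basis, hgl, coe_basisMonomials]
        rfl
    exact LinearMap.congr_fun this p
  · rw [p.as_sum, map_sum]
    refine IsHomogeneous.sum _ _ _ fun s hs => ?_
    have hsm : s.degree = m := by
      by_contra h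
      exact mem_support_iff.mp hs (hp.coeff_eq_zero h)
    rw [← mul_one (coeff s p), ← smul_eq_mul, ← smul_monomial, map_smul, hG, ← hsm]
    exact (homogeneousSubmodule (Fin n) ℝ _).smul_mem _ (hg s)

section Correction

variable {n : ℕ} {G : MvPolynomial (Fin n) ℝ →ₗ[ℝ] MvPolynomial (Fin n) ℝ}

theorem divL_gradL_rightInverse (hG : ∀ p, lapL n (G p) = p) (c : ℝ)
    (u : Fin n → MvPolynomial (Fin n) ℝ) :
    divL n (u + c • gradL n (G (divL n u))) = (1 + c) • divL n u := by
  rw [map_add, map_smul, divL_gradL, hG, add_smul, one_smul]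

theorem add_smul_gradL_comp (hG : ∀ p, lapL n (G p) = p) {c d : ℝ} (h : c + (1 + c) * d = 0)
    (u : Fin n → MvPolynomial (Fin n) ℝ) :
    (u + c • gradL n (G (divL n u))) +
      d • gradL n (G (divL n (u + c • gradL n (G (divL n u))))) = u := by
  rw [divL_gradL_rightInverse hG, map_smul, map_smul, smul_smul, add_assoc, ← add_smul,
    mul_comm d, h, zero_smul, add_zero]

theorem isHomogeneous_add_smul_gradL
    (hGd : ∀ m p, p.IsHomogeneous m → (G p).IsHomogeneous (m + 2)) (c : ℝ) {k : ℕ}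
    {u : Fin n → MvPolynomial (Fin n) ℝ} (hu : ∀ j, (u j).IsHomogeneous k) (j : Fin n) :
    ((u + c • gradL n (G (divL n u))) j).IsHomogeneous k := by
  refine (hu j).add ((homogeneousSubmodule (Fin n) ℝ k).smul_mem c ?_)
  rw [mem_homogeneousSubmodule, gradL_apply]
  rcases k with _ | k
  · have hdiv : divL n u = 0 := by
      rw [divL_apply]
      refine Finset.sum_eq_zero fun r _ => ?_
      rw [totalDegree_eq_zero_iff_eq_C.mp ((totalDegree_zero_iff_isHomogeneous _).mpr (hu r)),
        pderiv_C]
    simp [hdiv, isHomogeneous_zero]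
  · have hdiv : (divL n u).IsHomogeneous k := by
      rw [divL_apply]
      exact IsHomogeneous.sum _ _ _ fun r _ => (hu r).pderiv
    exact (hGd _ _ hdiv).pderiv

theorem navierL_add_smul_gradL (hG : ∀ p, lapL n (G p) = p) {b c : ℝ}
    (h : c + b * (1 + c) = 0) (u : Fin n → MvPolynomial (Fin n) ℝ) (j : Fin n) :
    navierL n b (u + c • gradL n (G (divL n u))) j = lapL n (u j) := by
  rw [navierL_apply, divL_gradL_rightInverse hG, Pi.add_apply, Pi.smul_apply, gradL_apply,
    map_add, map_smul, lapL_pderiv, hG, Derivation.map_smul, smul_smul, add_assoc, ← add_smul,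
    h, zero_smul, add_zero]

end Correction

/-- Tuples of harmonic polynomials correspond linearly to solutions of the Navier equations. -/
theorem nonempty_linearEquiv_HhatSub {n : ℕ} (hn : 0 < n) {b : ℝ} (hb : 0 < b + 1) (k : ℕ) :
    Nonempty ((Fin n → harmSub n k) ≃ₗ[ℝ] HhatSub n b k) := by
  obtain ⟨G, hG, hGd⟩ := exists_lapL_rightInverse hn
  obtain ⟨c, hc⟩ : ∃ c : ℝ, c + b * (1 + c) = 0 := ⟨-b / (b + 1), by
    have := hb.ne'
    field_simp
    ring⟩
  let T (c : ℝ) : (Fin n → MvPolynomial (Fin n) ℝ) →ₗ[ℝ] (Fin n → MvPolynomial (Fin n) ℝ) :=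
    LinearMap.id + c • (gradL n ∘ₗ G ∘ₗ divL n)
  have hTbc : ∀ u, T b (T c u) = u := add_smul_gradL_comp hG (by linarith)
  have hTcb : ∀ u, T c (T b u) = u := add_smul_gradL_comp hG (by linarith)
  have hN : ∀ u j, navierL n b (T c u) j = lapL n (u j) := navierL_add_smul_gradL hG hc
  let ι : (Fin n → harmSub n k) →ₗ[ℝ] (Fin n → MvPolynomial (Fin n) ℝ) :=
    LinearMap.pi fun j => (harmSub n k).subtype ∘ₗ LinearMap.proj j
  let F : (Fin n → harmSub n k) →ₗ[ℝ] HhatSub n b k :=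
    (T c ∘ₗ ι).codRestrict _ fun u => mem_HhatSub.mpr
      ⟨isHomogeneous_add_smul_gradL hGd c fun j => (mem_harmSub.mp (u j).2).1,
        funext fun j => (hN (ι u) j).trans (mem_harmSub.mp (u j).2).2⟩
  refine ⟨LinearEquiv.ofBijective F ⟨fun u v huv => ?_, fun w => ?_⟩⟩
  · have h : T c (ι u) = T c (ι v) := congrArg Subtype.val huv
    have h' : ι u = ι v := by rw [← hTbc (ι u), h, hTbc]
    exact funext fun j => Subtype.ext (congrFun h' j)
  · obtain ⟨hwd, hw0⟩ := mem_HhatSub.mp w.2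
    have hw : ∀ j, T b w j ∈ harmSub n k := fun j => mem_harmSub.mpr
      ⟨isHomogeneous_add_smul_gradL hGd b hwd j, by rw [← hN, hTcb, hw0]; rfl⟩
    exact ⟨fun j => ⟨T b w j, hw j⟩, Subtype.ext (hTcb w)⟩

/-- `dim Ĥₖ = n · dim Hₖ`. -/
theorem dim_Hhat_eq (n : ℕ) (hn : 3 ≤ n) (b : ℝ) (hb : b ≠ 0) (hb1 : 0 < b + 1)
    (k : ℕ) :
    Module.rank ℝ ↥(HhatSub n b k) = n * Module.rank ℝ ↥(harmSub n k) := by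
  obtain ⟨e⟩ := nonempty_linearEquiv_HhatSub (n := n) (by omega) hb1 k
  rw [← e.rank_eq, rank_fun, Fintype.card_fin]
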